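/- arXiv:2101.04542 — 2 statements merged into one kernel-verified Lean document; each statement's English description precedes it below -/
import Mathlib

section
/- Let q be a power of a prime p and let H be a subgroup of the symplectic similitude group GSp₄(q) that stabilizes a decomposition V = V₁ ⊥ V₂ of the natural module V = F_q⁴ into two nondegenerate 2-dimensional subspaces (that is, H permutes the set {V₁, V₂} and hence stabilizes the decomposition). Then there exist x, y, z ∈ Sp₄(q) such that H ∩ H^x ∩ H^y ∩ H^z is contained in the center Z(GSp₄(q)), i.e. consists of scalar matrices. -/
open Matrix Pointwise

/-- `H^x = x⁻¹ H x`. -/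
def conjBy {G : Type*} [Group G] (H : Subgroup G) (x : G) : Subgroup G :=
  Subgroup.map ((MulAut.conj x⁻¹).toMonoidHom) H

/-- Hall π-subgroup of the whole group. -/
def IsHallSubgroup {G : Type*} [Group G] (π : Set ℕ) (H : Subgroup G) : Prop :=
  (∀ r : ℕ, r.Prime → r ∣ Nat.card H → r ∈ π) ∧ ∀ r ∈ π, ¬ r ∣ H.index

/-- Hall π-subgroup of the subgroup `K`. -/
def IsHallSubgroupIn {G : Type*} [Group G] (π : Set ℕ) (K H : Subgroup G) : Prop :=
  H ≤ K ∧ (∀ r : ℕ, r.Prime → r ∣ Nat.card H → r ∈ π) ∧ ∀ r ∈ π, ¬ r ∣ H.relIndex K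

/-- The subgroup `SL_n` of `GL_n`. -/
def SLsub (n : ℕ) (F : Type*) [Field F] : Subgroup (GL (Fin n) F) where
  carrier := {g | Matrix.det (g : Matrix (Fin n) (Fin n) F) = 1}
  one_mem' := by simp
  mul_mem' := by
    intro a b ha hb
    simp only [Set.mem_setOf_eq, Units.val_mul, Matrix.det_mul] at *
    rw [ha, hb, one_mul]
  inv_mem' := by
    intro g hg
    simp only [Set.mem_setOf_eq] at *
    have h1 : ((g⁻¹ : GL (Fin n) F) : Matrix (Fin n) (Fin n) F) *
        (g : Matrix (Fin n) (Fin n) F) = 1 := g.inv_mul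
    have := congrArg Matrix.det h1
    rw [Matrix.det_mul, Matrix.det_one, hg, mul_one] at this
    exact this

/-- The group of similitudes of the bilinear form `B` (acting on row vectors). -/
def similitudeGroup {n : ℕ} {F : Type*} [Field F]
    (B : (Fin n → F) → (Fin n → F) → F) : Subgroup (GL (Fin n) F) where
  carrier := {g | ∃ c : Fˣ, ∀ u v : Fin n → F,
    B (Matrix.vecMul u (g : Matrix (Fin n) (Fin n) F))
      (Matrix.vecMul v (g : Matrix (Fin n) (Fin n) F)) = (c : F) * B u v}
  one_mem' := ⟨1, by simp⟩
  mul_mem' := by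
    rintro a b ⟨c, hc⟩ ⟨d, hd⟩
    refine ⟨c * d, fun u v => ?_⟩
    simp only [Units.val_mul, ← Matrix.vecMul_vecMul, hd, hc]
    ring
  inv_mem' := by
    rintro g ⟨c, hc⟩
    refine ⟨c⁻¹, fun u v => ?_⟩
    have h1 : ∀ w : Fin n → F, Matrix.vecMul
        (Matrix.vecMul w ((g⁻¹ : GL (Fin n) F) : Matrix (Fin n) (Fin n) F))
        (g : Matrix (Fin n) (Fin n) F) = w := by
      intro w
      rw [Matrix.vecMul_vecMul, g.inv_mul, Matrix.vecMul_one]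
    have h2 := hc (Matrix.vecMul u ((g⁻¹ : GL (Fin n) F) : Matrix (Fin n) (Fin n) F))
      (Matrix.vecMul v ((g⁻¹ : GL (Fin n) F) : Matrix (Fin n) (Fin n) F))
    rw [h1, h1] at h2
    rw [h2, Units.val_inv_eq_inv_val, inv_mul_cancel_left₀ (by exact_mod_cast c.ne_zero)]

/-- The isometry group of the bilinear form `B` (acting on row vectors). -/
def isometryGroup {n : ℕ} {F : Type*} [Field F]
    (B : (Fin n → F) → (Fin n → F) → F) : Subgroup (GL (Fin n) F) where
  carrier := {g | ∀ u v : Fin n → F,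
    B (Matrix.vecMul u (g : Matrix (Fin n) (Fin n) F))
      (Matrix.vecMul v (g : Matrix (Fin n) (Fin n) F)) = B u v}
  one_mem' := by simp
  mul_mem' := by
    intro a b ha hb u v
    simp only [Set.mem_setOf_eq] at ha hb
    simp only [Units.val_mul, ← Matrix.vecMul_vecMul]
    rw [hb, ha]
  inv_mem' := by
    intro g hg u v
    have h1 : ∀ w : Fin n → F, Matrix.vecMul
        (Matrix.vecMul w ((g⁻¹ : GL (Fin n) F) : Matrix (Fin n) (Fin n) F))
        (g : Matrix (Fin n) (Fin n) F) = w := by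
      intro w
      rw [Matrix.vecMul_vecMul, g.inv_mul, Matrix.vecMul_one]
    have h2 := hg (Matrix.vecMul u ((g⁻¹ : GL (Fin n) F) : Matrix (Fin n) (Fin n) F))
      (Matrix.vecMul v ((g⁻¹ : GL (Fin n) F) : Matrix (Fin n) (Fin n) F))
    rw [h1, h1] at h2
    exact h2.symm

/-- The group of similitudes of the quadratic form `Q` (acting on row vectors). -/
def qSimilitudeGroup {n : ℕ} {F : Type*} [Field F]
    (Q : (Fin n → F) → F) : Subgroup (GL (Fin n) F) where
  carrier := {g | ∃ c : Fˣ, ∀ v : Fin n → F,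
    Q (Matrix.vecMul v (g : Matrix (Fin n) (Fin n) F)) = (c : F) * Q v}
  one_mem' := ⟨1, by simp⟩
  mul_mem' := by
    rintro a b ⟨c, hc⟩ ⟨d, hd⟩
    refine ⟨c * d, fun v => ?_⟩
    simp only [Units.val_mul, ← Matrix.vecMul_vecMul, hd, hc]
    ring
  inv_mem' := by
    rintro g ⟨c, hc⟩
    refine ⟨c⁻¹, fun v => ?_⟩
    have h1 : ∀ w : Fin n → F, Matrix.vecMul
        (Matrix.vecMul w ((g⁻¹ : GL (Fin n) F) : Matrix (Fin n) (Fin n) F))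
        (g : Matrix (Fin n) (Fin n) F) = w := by
      intro w
      rw [Matrix.vecMul_vecMul, g.inv_mul, Matrix.vecMul_one]
    have h2 := hc (Matrix.vecMul v ((g⁻¹ : GL (Fin n) F) : Matrix (Fin n) (Fin n) F))
    rw [h1] at h2
    rw [h2, Units.val_inv_eq_inv_val, inv_mul_cancel_left₀ (by exact_mod_cast c.ne_zero)]

/-- The unitary group `GU_n` with respect to the field automorphism `φ`. -/
def GUgrp (n : ℕ) {K : Type*} [Field K] (φ : K →+* K) : Subgroup (GL (Fin n) K) where
  carrier := {g | ((g : Matrix (Fin n) (Fin n) K).map φ)ᵀ * (g : Matrix (Fin n) (Fin n) K) = 1}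
  one_mem' := by
    simp [Matrix.map_one φ φ.map_zero φ.map_one]
  mul_mem' := by
    intro a b ha hb
    simp only [Set.mem_setOf_eq, Units.val_mul, Matrix.map_mul, Matrix.transpose_mul] at *
    calc ((b : Matrix (Fin n) (Fin n) K).map φ)ᵀ * ((a : Matrix (Fin n) (Fin n) K).map φ)ᵀ *
          ((a : Matrix (Fin n) (Fin n) K) * (b : Matrix (Fin n) (Fin n) K))
        = ((b : Matrix (Fin n) (Fin n) K).map φ)ᵀ *
          (((a : Matrix (Fin n) (Fin n) K).map φ)ᵀ * (a : Matrix (Fin n) (Fin n) K)) *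
          (b : Matrix (Fin n) (Fin n) K) := by noncomm_ring
      _ = 1 := by rw [ha, mul_one, hb]
  inv_mem' := by
    intro g hg
    simp only [Set.mem_setOf_eq] at *
    have hcomm : (g : Matrix (Fin n) (Fin n) K) * ((g : Matrix (Fin n) (Fin n) K).map φ)ᵀ = 1 :=
      mul_eq_one_comm.mp hg
    have h1 : ((g : Matrix (Fin n) (Fin n) K) * ((g⁻¹ : GL (Fin n) K) : Matrix (Fin n) (Fin n) K)).map φ = 1 := by
      rw [g.mul_inv]
      exact Matrix.map_one φ φ.map_zero φ.map_one
    rw [Matrix.map_mul] at h1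
    have h2 := congrArg Matrix.transpose h1
    rw [Matrix.transpose_mul, Matrix.transpose_one] at h2
    calc (((g⁻¹ : GL (Fin n) K) : Matrix (Fin n) (Fin n) K).map φ)ᵀ *
          ((g⁻¹ : GL (Fin n) K) : Matrix (Fin n) (Fin n) K)
        = (((g⁻¹ : GL (Fin n) K) : Matrix (Fin n) (Fin n) K).map φ)ᵀ *
          (((g : Matrix (Fin n) (Fin n) K).map φ)ᵀ * (g : Matrix (Fin n) (Fin n) K)) *
          ((g⁻¹ : GL (Fin n) K) : Matrix (Fin n) (Fin n) K) := by rw [hg, mul_one]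
      _ = ((((g⁻¹ : GL (Fin n) K) : Matrix (Fin n) (Fin n) K).map φ)ᵀ *
          ((g : Matrix (Fin n) (Fin n) K).map φ)ᵀ) *
          ((g : Matrix (Fin n) (Fin n) K) * ((g⁻¹ : GL (Fin n) K) : Matrix (Fin n) (Fin n) K)) := by
            noncomm_ring
      _ = 1 := by rw [h2, g.mul_inv, mul_one]

/-!
For orthogonal `u ∈ V₁` and `v ∈ V₂`, the short root element `w ↦ w + B(w, u) v + B(w, v) u` is an
isometry. Choose hyperbolic bases `a₁, b₁` of `V₁` and `a₂, b₂` of `V₂`, and let `x, y, z` be the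
short root elements attached to `(b₁, a₂)`, `(b₁, b₂)`, `(a₁, a₂)`. Suppose `g` permutes
`{V₁, V₂}` and its images under `x, y, z`.

For each of these short root elements `s`, attached to `(u, v)`, `V₁ ∩ V₁s` contains `u` while
`V₁ ∩ V₂s = V₂ ∩ V₁s = 0`. So `g` either fixes all the subspaces or swaps every pair. Swapping is
impossible, as `g` would then send both `a₂` and `b₂` into the line of `b₁`. If all are fixed, then
comparing the components of the images of `w + B(w, u) v ∈ V₁s` gives `B(w, u) vg = B(wg, u) v` for
`w ∈ V₁`; this shows that `a₁, b₁, a₂, b₂` are eigenvectors of `g` with the same eigenvalue.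
-/

section PermutesPair

variable {R M N : Type*} [Semiring R] [AddCommMonoid M] [AddCommMonoid N] [Module R M] [Module R N]

/-- The endomorphism `f` permutes the unordered pair of submodules `{U, W}`, that is, it stabilizes
the decomposition with summands `U` and `W`. -/
def PermutesPair (f : M →ₗ[R] M) (U W : Submodule R M) : Prop :=
  (U.map f = U ∧ W.map f = W) ∨ (U.map f = W ∧ W.map f = U)

theorem PermutesPair.map_of_comp_eq {f : M →ₗ[R] M} {f' : N →ₗ[R] N} {e : M →ₗ[R] N}
    {U W : Submodule R M} (h : PermutesPair f U W) (hfe : f' ∘ₗ e = e ∘ₗ f) :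
    PermutesPair f' (U.map e) (W.map e) := by
  have hmap (X : Submodule R M) : (X.map e).map f' = (X.map f).map e := by
    rw [← Submodule.map_comp, hfe, Submodule.map_comp]
  unfold PermutesPair
  rw [hmap, hmap]
  exact h.imp (fun ⟨hU, hW⟩ => ⟨by rw [hU], by rw [hW]⟩) fun ⟨hU, hW⟩ => ⟨by rw [hU], by rw [hW]⟩

end PermutesPair

section ShortRootElement

variable {R M : Type*} [CommRing R] [AddCommGroup M] [Module R M]

/-- The map `w ↦ w + B(w, u) v + B(w, v) u`. If `B` is alternating and `u`, `v` are orthogonal,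
this is an isometry; in the symplectic group it is a short root element when `u` and `v` are
linearly independent. -/
def shortRootElement (B : LinearMap.BilinForm R M) (u v : M) : M →ₗ[R] M :=
  LinearMap.id + (B.flip u).smulRight v + (B.flip v).smulRight u

variable {B : LinearMap.BilinForm R M} {u v : M}

theorem shortRootElement_apply (w : M) :
    shortRootElement B u v w = w + B w u • v + B w v • u := rfl

theorem shortRootElement_comm : shortRootElement B u v = shortRootElement B v u :=
  add_right_comm _ _ _

theorem shortRootElement_comp_neg (hB : B.IsAlt) (huv : B u v = 0) :
    shortRootElement B u v ∘ₗ shortRootElement B u (-v) = LinearMap.id := by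
  have hvu : B v u = 0 := hB.isRefl u v huv
  ext w
  simp only [LinearMap.comp_apply, LinearMap.id_apply, shortRootElement_apply, map_add, map_neg,
    map_smul, huv, hvu, hB.self_eq_zero]
  module

theorem apply_shortRootElement_shortRootElement (hB : B.IsAlt) (huv : B u v = 0) (w w' : M) :
    B (shortRootElement B u v w) (shortRootElement B u v w') = B w w' := by
  have hvu : B v u = 0 := hB.isRefl u v huv
  simp only [shortRootElement_apply, map_add, map_smul, LinearMap.add_apply, LinearMap.smul_apply,
    huv, hvu, hB.self_eq_zero, smul_eq_mul, ← hB.neg_eq w' u, ← hB.neg_eq w' v]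
  ring

variable {U W : Submodule R M}

theorem add_mem_map_shortRootElement_left_iff (hUW : Disjoint U W)
    (horth : ∀ u ∈ U, ∀ w ∈ W, B u w = 0) (hv : v ∈ W) {a b : M} (ha : a ∈ U) (hb : b ∈ W) :
    a + b ∈ U.map (shortRootElement B u v) ↔ b = B a u • v := by
  have happly {w : M} (hw : w ∈ U) : shortRootElement B u v w = w + B w u • v := by
    rw [shortRootElement_apply, horth w hw v hv, zero_smul, add_zero]
  constructor
  · rintro ⟨w, hw, hwab⟩
    rw [SetLike.mem_coe] at hw
    have hsub : (w - a) + (B w u • v - b) = 0 := by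
      rw [sub_add_sub_comm, ← happly hw, hwab, sub_self]
    obtain ⟨hwa, hvb⟩ := Submodule.disjoint_iff_add_eq_zero.1 hUW (U.sub_mem hw ha)
      (W.sub_mem (W.smul_mem _ hv) hb) hsub
    rw [← sub_eq_zero.1 hwa, sub_eq_zero.1 hvb]
  · rintro rfl
    exact ⟨a, ha, happly ha⟩

theorem add_mem_map_shortRootElement_right_iff (hB : B.IsAlt) (hUW : Disjoint U W)
    (horth : ∀ u ∈ U, ∀ w ∈ W, B u w = 0) (hu : u ∈ U) {a b : M} (ha : a ∈ U) (hb : b ∈ W) :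
    a + b ∈ W.map (shortRootElement B u v) ↔ a = B b v • u := by
  rw [add_comm, shortRootElement_comm]
  exact add_mem_map_shortRootElement_left_iff hUW.symm
    (fun w hw u hu => hB.isRefl u w (horth u hu w hw)) hu hb ha

theorem mem_map_shortRootElement_self (hB : B.IsAlt) (hUW : Disjoint U W)
    (horth : ∀ u ∈ U, ∀ w ∈ W, B u w = 0) (hu : u ∈ U) (hv : v ∈ W) :
    u ∈ U.map (shortRootElement B u v) := by
  simpa using (add_mem_map_shortRootElement_left_iff hUW horth hv hu W.zero_mem).2
    (by rw [hB.self_eq_zero, zero_smul])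

theorem disjoint_map_shortRootElement_right (hB : B.IsAlt) (hUW : Disjoint U W)
    (horth : ∀ u ∈ U, ∀ w ∈ W, B u w = 0) (hu : u ∈ U) :
    Disjoint U (W.map (shortRootElement B u v)) := by
  refine Submodule.disjoint_def.2 fun a ha haS => ?_
  rw [← add_zero a, add_mem_map_shortRootElement_right_iff hB hUW horth hu ha W.zero_mem] at haS
  simpa using haS

theorem disjoint_map_shortRootElement_left (hUW : Disjoint U W)
    (horth : ∀ u ∈ U, ∀ w ∈ W, B u w = 0) (hv : v ∈ W) :
    Disjoint W (U.map (shortRootElement B u v)) := by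
  refine Submodule.disjoint_def.2 fun b hb hbS => ?_
  rw [← zero_add b, add_mem_map_shortRootElement_left_iff hUW horth hv U.zero_mem hb] at hbS
  simpa using hbS

variable {f : M →ₗ[R] M}

theorem smul_apply_eq_of_map_shortRootElement_le (hUW : Disjoint U W)
    (horth : ∀ u ∈ U, ∀ w ∈ W, B u w = 0) (hv : v ∈ W) (hU : U.map f ≤ U) (hW : W.map f ≤ W)
    (hS : (U.map (shortRootElement B u v)).map f ≤ U.map (shortRootElement B u v))
    {w : M} (hw : w ∈ U) : B w u • f v = B (f w) u • v := by
  have hmem : w + B w u • v ∈ U.map (shortRootElement B u v) :=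
    (add_mem_map_shortRootElement_left_iff hUW horth hv hw (W.smul_mem _ hv)).2 rfl
  have hfmem := hS (Submodule.mem_map_of_mem hmem)
  rw [map_add, map_smul] at hfmem
  exact (add_mem_map_shortRootElement_left_iff hUW horth hv
    (hU (Submodule.mem_map_of_mem hw)) (W.smul_mem _ (hW (Submodule.mem_map_of_mem hv)))).1 hfmem

theorem smul_apply_eq_of_map_shortRootElement_le_swap (hB : B.IsAlt) (hUW : Disjoint U W)
    (horth : ∀ u ∈ U, ∀ w ∈ W, B u w = 0) (hu : u ∈ U) (hv : v ∈ W)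
    (hU : U.map f ≤ W) (hW : W.map f ≤ U)
    (hS : (U.map (shortRootElement B u v)).map f ≤ W.map (shortRootElement B u v))
    {w : M} (hw : w ∈ U) : B w u • f v = B (f w) v • u := by
  have hmem : w + B w u • v ∈ U.map (shortRootElement B u v) :=
    (add_mem_map_shortRootElement_left_iff hUW horth hv hw (W.smul_mem _ hv)).2 rfl
  have hfmem := hS (Submodule.mem_map_of_mem hmem)
  rw [map_add, map_smul, add_comm] at hfmem
  exact (add_mem_map_shortRootElement_right_iff hB hUW horth hu
    (U.smul_mem _ (hW (Submodule.mem_map_of_mem hv))) (hU (Submodule.mem_map_of_mem hw))).1 hfmem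

namespace PermutesPair

theorem map_shortRootElement_eq (hB : B.IsAlt) (hUW : Disjoint U W)
    (horth : ∀ u ∈ U, ∀ w ∈ W, B u w = 0) (hu : u ∈ U) (hv : v ∈ W) (hu₀ : u ≠ 0)
    (hf : Function.Injective f) (hU : U.map f ≤ U)
    (h : PermutesPair f (U.map (shortRootElement B u v)) (W.map (shortRootElement B u v))) :
    (U.map (shortRootElement B u v)).map f = U.map (shortRootElement B u v) ∧
      (W.map (shortRootElement B u v)).map f = W.map (shortRootElement B u v) := by
  refine h.resolve_right fun ⟨hS, _⟩ => (map_ne_zero_iff f hf).2 hu₀ ?_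
  exact Submodule.disjoint_def.1 (disjoint_map_shortRootElement_right hB hUW horth hu) _
    (hU (Submodule.mem_map_of_mem hu))
    (hS.le (Submodule.mem_map_of_mem (mem_map_shortRootElement_self hB hUW horth hu hv)))

theorem map_shortRootElement_eq_swap (hB : B.IsAlt) (hUW : Disjoint U W)
    (horth : ∀ u ∈ U, ∀ w ∈ W, B u w = 0) (hu : u ∈ U) (hv : v ∈ W) (hu₀ : u ≠ 0)
    (hf : Function.Injective f) (hU : U.map f ≤ W)
    (h : PermutesPair f (U.map (shortRootElement B u v)) (W.map (shortRootElement B u v))) :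
    (U.map (shortRootElement B u v)).map f = W.map (shortRootElement B u v) ∧
      (W.map (shortRootElement B u v)).map f = U.map (shortRootElement B u v) := by
  refine h.resolve_left fun ⟨hS, _⟩ => (map_ne_zero_iff f hf).2 hu₀ ?_
  exact Submodule.disjoint_def.1 (disjoint_map_shortRootElement_left hUW horth hv) _
    (hU (Submodule.mem_map_of_mem hu))
    (hS.le (Submodule.mem_map_of_mem (mem_map_shortRootElement_self hB hUW horth hu hv)))

theorem smul_apply_eq (hB : B.IsAlt) (hUW : Disjoint U W)
    (horth : ∀ u ∈ U, ∀ w ∈ W, B u w = 0) (hu : u ∈ U) (hv : v ∈ W) (hu₀ : u ≠ 0)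
    (hf : Function.Injective f) (hU : U.map f ≤ U) (hW : W.map f ≤ W)
    (h : PermutesPair f (U.map (shortRootElement B u v)) (W.map (shortRootElement B u v))) :
    (∀ w ∈ U, B w u • f v = B (f w) u • v) ∧ ∀ w ∈ W, B w v • f u = B (f w) v • u := by
  obtain ⟨hUS, hWS⟩ := h.map_shortRootElement_eq hB hUW horth hu hv hu₀ hf hU
  refine ⟨fun w => smul_apply_eq_of_map_shortRootElement_le hUW horth hv hU hW hUS.le, fun w => ?_⟩
  rw [shortRootElement_comm] at hWS
  exact smul_apply_eq_of_map_shortRootElement_le hUW.symm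
    (fun w hw u hu => hB.isRefl u w (horth u hu w hw)) hu hW hU hWS.le

theorem smul_apply_eq_swap (hB : B.IsAlt) (hUW : Disjoint U W)
    (horth : ∀ u ∈ U, ∀ w ∈ W, B u w = 0) (hu : u ∈ U) (hv : v ∈ W) (hu₀ : u ≠ 0)
    (hf : Function.Injective f) (hU : U.map f ≤ W) (hW : W.map f ≤ U)
    (h : PermutesPair f (U.map (shortRootElement B u v)) (W.map (shortRootElement B u v)))
    {w : M} (hw : w ∈ U) : B w u • f v = B (f w) v • u :=
  smul_apply_eq_of_map_shortRootElement_le_swap hB hUW horth hu hv hU hW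
    (h.map_shortRootElement_eq_swap hB hUW horth hu hv hu₀ hf hU).1.le hw

end PermutesPair

end ShortRootElement

section HyperbolicBasis

/-- The vectors `a` and `b` span `U` and satisfy `B(a, b) = 1`. When `B` is alternating, `(a, b)`
is a hyperbolic basis of the plane `U`. -/
structure IsHyperbolicBasis {R M : Type*} [CommRing R] [AddCommGroup M] [Module R M]
    (B : LinearMap.BilinForm R M) (U : Submodule R M) (a b : M) : Prop where
  span_eq : Submodule.span R {a, b} = U
  apply_eq_one : B a b = 1

section CommRing

variable {R M : Type*} [CommRing R] [AddCommGroup M] [Module R M]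
  {B : LinearMap.BilinForm R M} {U W : Submodule R M} {a b a₁ b₁ a₂ b₂ : M} {f : M →ₗ[R] M}

theorem linearIndependent_pair_of_apply_eq_one (hB : B.IsAlt) (hab : B a b = 1) :
    LinearIndependent R ![a, b] := by
  refine LinearIndependent.pair_iff.2 fun s t hst => ⟨?_, ?_⟩
  · simpa [hab, hB.self_eq_zero] using congrArg (B · b) hst
  · simpa [hab, hB.self_eq_zero] using congrArg (B a) hst

namespace IsHyperbolicBasis

theorem left_mem (h : IsHyperbolicBasis B U a b) : a ∈ U :=
  h.span_eq ▸ Submodule.mem_span_pair.2 ⟨1, 0, by simp⟩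

theorem right_mem (h : IsHyperbolicBasis B U a b) : b ∈ U :=
  h.span_eq ▸ Submodule.mem_span_pair.2 ⟨0, 1, by simp⟩

theorem left_ne_zero [Nontrivial R] (h : IsHyperbolicBasis B U a b) : a ≠ 0 := by
  rintro rfl
  simpa using h.apply_eq_one

theorem right_ne_zero [Nontrivial R] (h : IsHyperbolicBasis B U a b) : b ≠ 0 := by
  rintro rfl
  simpa using h.apply_eq_one

theorem eq_smul_id (h₁ : IsHyperbolicBasis B U a₁ b₁) (h₂ : IsHyperbolicBasis B W a₂ b₂)
    (hUW : Codisjoint U W) {c : R} (ha₁ : f a₁ = c • a₁) (hb₁ : f b₁ = c • b₁)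
    (ha₂ : f a₂ = c • a₂) (hb₂ : f b₂ = c • b₂) : f = c • LinearMap.id := by
  have hspan : Submodule.span R ({a₁, b₁} ∪ {a₂, b₂}) = ⊤ := by
    rw [Submodule.span_union, h₁.span_eq, h₂.span_eq, codisjoint_iff.1 hUW]
  refine LinearMap.ext_on hspan ?_
  rintro _ ((rfl | rfl) | (rfl | rfl)) <;> assumption

end IsHyperbolicBasis

variable [Nontrivial R]

theorem PermutesPair.not_swap (hB : B.IsAlt) (hUW : Disjoint U W)
    (horth : ∀ u ∈ U, ∀ w ∈ W, B u w = 0)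
    (h₁ : IsHyperbolicBasis B U a₁ b₁) (h₂ : IsHyperbolicBasis B W a₂ b₂)
    (hf : Function.Injective f)
    (hx : PermutesPair f (U.map (shortRootElement B b₁ a₂)) (W.map (shortRootElement B b₁ a₂)))
    (hy : PermutesPair f (U.map (shortRootElement B b₁ b₂)) (W.map (shortRootElement B b₁ b₂))) :
    ¬ (U.map f = W ∧ W.map f = U) := by
  rintro ⟨hU, hW⟩
  have ha₂ : f a₂ = B (f a₁) a₂ • b₁ := by
    simpa [h₁.apply_eq_one] using hx.smul_apply_eq_swap hB hUW horth h₁.right_mem h₂.left_mem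
      h₁.right_ne_zero hf hU.le hW.le h₁.left_mem
  have hb₂ : f b₂ = B (f a₁) b₂ • b₁ := by
    simpa [h₁.apply_eq_one] using hy.smul_apply_eq_swap hB hUW horth h₁.right_mem h₂.right_mem
      h₁.right_ne_zero hf hU.le hW.le h₁.left_mem
  have hdep : B (f a₁) b₂ • a₂ + -B (f a₁) a₂ • b₂ = 0 := by
    refine (map_eq_zero_iff f hf).1 ?_
    rw [map_add, map_smul, map_smul, ha₂, hb₂]
    module
  have hzero : B (f a₁) b₂ = 0 :=
    (LinearIndependent.pair_iff.1
      (linearIndependent_pair_of_apply_eq_one hB h₂.apply_eq_one) _ _ hdep).1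
  exact h₂.right_ne_zero ((map_eq_zero_iff f hf).1 (by rw [hb₂, hzero, zero_smul]))

theorem exists_eq_smul_id_of_permutesPair (hB : B.IsAlt) (hUW : IsCompl U W)
    (horth : ∀ u ∈ U, ∀ w ∈ W, B u w = 0)
    (h₁ : IsHyperbolicBasis B U a₁ b₁) (h₂ : IsHyperbolicBasis B W a₂ b₂)
    (hf : Function.Injective f) (h : PermutesPair f U W)
    (hx : PermutesPair f (U.map (shortRootElement B b₁ a₂)) (W.map (shortRootElement B b₁ a₂)))
    (hy : PermutesPair f (U.map (shortRootElement B b₁ b₂)) (W.map (shortRootElement B b₁ b₂)))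
    (hz : PermutesPair f (U.map (shortRootElement B a₁ a₂)) (W.map (shortRootElement B a₁ a₂))) :
    ∃ c : R, f = c • LinearMap.id := by
  obtain ⟨hU, hW⟩ := h.resolve_right (hx.not_swap hB hUW.disjoint horth h₁ h₂ hf hy)
  obtain ⟨hxU, hxW⟩ := hx.smul_apply_eq hB hUW.disjoint horth h₁.right_mem h₂.left_mem
    h₁.right_ne_zero hf hU.le hW.le
  obtain ⟨hyU, -⟩ := hy.smul_apply_eq hB hUW.disjoint horth h₁.right_mem h₂.right_mem
    h₁.right_ne_zero hf hU.le hW.le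
  obtain ⟨-, hzW⟩ := hz.smul_apply_eq hB hUW.disjoint horth h₁.left_mem h₂.left_mem
    h₁.left_ne_zero hf hU.le hW.le
  have hba : B b₂ a₂ = -1 := by rw [← hB.neg_eq, h₂.apply_eq_one]
  have ha₂ : f a₂ = B (f a₁) b₁ • a₂ := by simpa [h₁.apply_eq_one] using hxU a₁ h₁.left_mem
  have hb₂ : f b₂ = B (f a₁) b₁ • b₂ := by simpa [h₁.apply_eq_one] using hyU a₁ h₁.left_mem
  have hb₁ : f b₁ = B (f a₁) b₁ • b₁ := by simpa [hb₂, hba] using hxW b₂ h₂.right_mem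
  have ha₁ : f a₁ = B (f a₁) b₁ • a₁ := by simpa [hb₂, hba] using hzW b₂ h₂.right_mem
  exact ⟨B (f a₁) b₁, h₁.eq_smul_id h₂ hUW.codisjoint ha₁ hb₁ ha₂ hb₂⟩

end CommRing

theorem exists_isHyperbolicBasis {K V : Type*} [Field K] [AddCommGroup V] [Module K V]
    {B : LinearMap.BilinForm K V} (hB : B.IsAlt) {U : Submodule K V}
    (hdim : Module.finrank K U = 2) (hnd : ∀ u ∈ U, (∀ w ∈ U, B u w = 0) → u = 0) :
    ∃ a b : V, IsHyperbolicBasis B U a b := by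
  have hU : U ≠ ⊥ := by
    rintro rfl
    simp at hdim
  obtain ⟨a, ha, ha₀⟩ := Submodule.exists_mem_ne_zero_of_ne_bot hU
  obtain ⟨w, hw, haw⟩ : ∃ w ∈ U, B a w ≠ 0 := by
    by_contra! h
    exact ha₀ (hnd a ha h)
  have hab : B a ((B a w)⁻¹ • w) = 1 := by
    rw [map_smul, smul_eq_mul, inv_mul_cancel₀ haw]
  have hle : Submodule.span K {a, (B a w)⁻¹ • w} ≤ U :=
    Submodule.span_le.2 (Set.pair_subset ha (U.smul_mem _ hw))
  have hspan : Module.finrank K (Submodule.span K {a, (B a w)⁻¹ • w}) = 2 := by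
    rw [← Matrix.range_cons_cons_empty a _ ![],
      finrank_span_eq_card (linearIndependent_pair_of_apply_eq_one hB hab), Fintype.card_fin]
  have : FiniteDimensional K U := Module.finite_of_finrank_eq_succ hdim
  exact ⟨a, _, Submodule.eq_of_le_of_finrank_eq hle (hspan.trans hdim.symm), hab⟩

end HyperbolicBasis

section GeneralLinearGroup

theorem exists_mem_isometryGroup_vecMulLinear_eq_shortRootElement {n : ℕ} {F : Type*}
    [Field F] {B : LinearMap.BilinForm F (Fin n → F)} (hB : B.IsAlt) {u v : Fin n → F}
    (huv : B u v = 0) :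
    ∃ x ∈ isometryGroup (fun u v => B u v),
      (x : Matrix (Fin n) (Fin n) F).vecMulLinear = shortRootElement B u v := by
  have hinv : (shortRootElement B u (-v)).toMatrixRight' * (shortRootElement B u v).toMatrixRight' =
      1 := by
    rw [← LinearMap.toMatrixRight'_comp, shortRootElement_comp_neg hB huv,
      LinearMap.toMatrixRight'_id]
  have hx : (shortRootElement B u v).toMatrixRight'.vecMulLinear = shortRootElement B u v :=
    LinearMap.toMatrixRight'.symm_apply_apply _
  refine ⟨⟨(shortRootElement B u v).toMatrixRight', _, mul_eq_one_comm.1 hinv, hinv⟩,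
    fun w w' => ?_, hx⟩
  change B (Matrix.vecMulLinear _ w) (Matrix.vecMulLinear _ w') = B w w'
  rw [hx, apply_shortRootElement_shortRootElement hB huv]

variable {n R : Type*} [Fintype n] [DecidableEq n] [CommRing R]

theorem permutesPair_vecMulLinear_of_mem_conjBy {H : Subgroup (GL n R)}
    {U W : Submodule R (n → R)}
    (hH : ∀ h ∈ H, PermutesPair (h : Matrix n n R).vecMulLinear U W)
    {x g : GL n R} (hg : g ∈ conjBy H x) :
    PermutesPair (g : Matrix n n R).vecMulLinear
      (U.map (x : Matrix n n R).vecMulLinear)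
      (W.map (x : Matrix n n R).vecMulLinear) := by
  obtain ⟨h, hh, rfl⟩ := hg
  refine (hH h hh).map_of_comp_eq (LinearMap.ext fun w => ?_)
  simp [Matrix.vecMul_vecMul, ← mul_assoc]

theorem eq_smul_one_of_vecMulLinear_eq {A : Matrix n n R} {c : R}
    (hA : A.vecMulLinear = c • LinearMap.id) : A = c • 1 := by
  refine Matrix.vecMul_injective (funext fun v => ?_)
  simpa [Matrix.vecMul_smul] using LinearMap.congr_fun hA v

end GeneralLinearGroup

theorem stmt0_general {F : Type*} [Field F] (B : LinearMap.BilinForm F (Fin 4 → F)) (hB : B.IsAlt)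
    (H : Subgroup (GL (Fin 4) F)) (V₁ V₂ : Submodule F (Fin 4 → F))
    (hdim₁ : Module.finrank F V₁ = 2) (hdim₂ : Module.finrank F V₂ = 2) (hcompl : IsCompl V₁ V₂)
    (horth : ∀ u ∈ V₁, ∀ v ∈ V₂, B u v = 0)
    (hnd₁ : ∀ u ∈ V₁, (∀ w ∈ V₁, B u w = 0) → u = 0)
    (hnd₂ : ∀ u ∈ V₂, (∀ w ∈ V₂, B u w = 0) → u = 0)
    (hH : ∀ h ∈ H, PermutesPair (h : Matrix (Fin 4) (Fin 4) F).vecMulLinear V₁ V₂) :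
    ∃ x y z : GL (Fin 4) F,
      x ∈ isometryGroup (fun u v => B u v) ∧
      y ∈ isometryGroup (fun u v => B u v) ∧
      z ∈ isometryGroup (fun u v => B u v) ∧
    ∀ g ∈ H ⊓ conjBy H x ⊓ conjBy H y ⊓ conjBy H z,
      ∃ c : F, (g : Matrix (Fin 4) (Fin 4) F) = c • (1 : Matrix (Fin 4) (Fin 4) F) := by
  obtain ⟨a₁, b₁, h₁⟩ := exists_isHyperbolicBasis hB hdim₁ hnd₁
  obtain ⟨a₂, b₂, h₂⟩ := exists_isHyperbolicBasis hB hdim₂ hnd₂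
  obtain ⟨x, hx, hxs⟩ := exists_mem_isometryGroup_vecMulLinear_eq_shortRootElement hB
    (horth b₁ h₁.right_mem a₂ h₂.left_mem)
  obtain ⟨y, hy, hys⟩ := exists_mem_isometryGroup_vecMulLinear_eq_shortRootElement hB
    (horth b₁ h₁.right_mem b₂ h₂.right_mem)
  obtain ⟨z, hz, hzs⟩ := exists_mem_isometryGroup_vecMulLinear_eq_shortRootElement hB
    (horth a₁ h₁.left_mem a₂ h₂.left_mem)
  refine ⟨x, y, z, hx, hy, hz, ?_⟩
  rintro g ⟨⟨⟨hg, hgx⟩, hgy⟩, hgz⟩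
  obtain ⟨c, hc⟩ := exists_eq_smul_id_of_permutesPair hB hcompl horth h₁ h₂
    (Matrix.vecMul_injective_of_isUnit g.isUnit) (hH g hg)
    (hxs ▸ permutesPair_vecMulLinear_of_mem_conjBy hH hgx)
    (hys ▸ permutesPair_vecMulLinear_of_mem_conjBy hH hgy)
    (hzs ▸ permutesPair_vecMulLinear_of_mem_conjBy hH hgz)
  exact ⟨c, eq_smul_one_of_vecMulLinear_eq hc⟩

/-- Lemma `sp4`: a subgroup of `GSp₄(q)` stabilising an orthogonal decomposition
`V = V₁ ⊥ V₂` into nondegenerate 2-dimensional subspaces can be intersected with three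
of its `Sp₄(q)`-conjugates down to scalar matrices. -/
theorem stmt0 (p f q : ℕ) (hp : p.Prime) (hf : 1 ≤ f) (hq : q = p ^ f)
    (F : Type) [Field F] [Fintype F] (hcard : Fintype.card F = q)
    (B : LinearMap.BilinForm F (Fin 4 → F))
    (halt : ∀ v : Fin 4 → F, B v v = 0) (hnd : ∀ m : Fin 4 → F, (∀ n : Fin 4 → F, B m n = 0) → m = 0)
    (H : Subgroup (GL (Fin 4) F))
    (hHle : H ≤ similitudeGroup (fun u v => B u v))
    (V₁ V₂ : Submodule F (Fin 4 → F))
    (hdim1 : Module.finrank F V₁ = 2) (hdim2 : Module.finrank F V₂ = 2)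
    (hsup : V₁ ⊔ V₂ = ⊤) (hinf : V₁ ⊓ V₂ = ⊥)
    (horth : ∀ u ∈ V₁, ∀ v ∈ V₂, B u v = 0)
    (hnd1 : ∀ u ∈ V₁, (∀ w ∈ V₁, B u w = 0) → u = 0)
    (hnd2 : ∀ u ∈ V₂, (∀ w ∈ V₂, B u w = 0) → u = 0)
    (hstab : ∀ h : GL (Fin 4) F, h ∈ H →
      (V₁.map (Matrix.vecMulLinear (h : Matrix (Fin 4) (Fin 4) F)) = V₁ ∧
       V₂.map (Matrix.vecMulLinear (h : Matrix (Fin 4) (Fin 4) F)) = V₂) ∨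
      (V₁.map (Matrix.vecMulLinear (h : Matrix (Fin 4) (Fin 4) F)) = V₂ ∧
       V₂.map (Matrix.vecMulLinear (h : Matrix (Fin 4) (Fin 4) F)) = V₁)) :
    ∃ x y z : GL (Fin 4) F,
      x ∈ isometryGroup (fun u v => B u v) ∧
      y ∈ isometryGroup (fun u v => B u v) ∧
      z ∈ isometryGroup (fun u v => B u v) ∧
    ∀ g ∈ H ⊓ conjBy H x ⊓ conjBy H y ⊓ conjBy H z,
      ∃ c : F, (g : Matrix (Fin 4) (Fin 4) F) = c • (1 : Matrix (Fin 4) (Fin 4) F) :=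
  stmt0_general B halt H V₁ V₂ hdim1 hdim2 ⟨disjoint_iff.2 hinf, codisjoint_iff.2 hsup⟩ horth
    hnd1 hnd2 hstab
end

section
/- Let F be a field, let n ≥ 3 be odd, and let e₁, …, e_n be the standard basis of F^n. For 1 ≤ i ≤ (n−1)/2 set V_i = span(e_{2i−1}, e_{2i}) and V_i' = span(e_{2i}, e_{2i+1}), and set W = span(e_n) and W' = span(e₁). Suppose g ∈ GL_n(F) permutes the subspaces V₁, …, V_{(n−1)/2} among themselves and maps W to W, and also permutes the subspaces V₁', …, V'_{(n−1)/2} among themselves and maps W' to W'. Then g is a diagonal matrix. -/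
open Matrix

/-! The `k`-th edge of the path `0 — 1 — ⋯ — n` is the plane `⟨e k, e (k + 1)⟩`; the spaces `Vᵢ` and
`Vᵢ'` together are the edges of even and of odd index. An injective map permuting the edges keeps
them pairwise distinct and keeps consecutive ones intersecting, so as soon as it fixes the line of
the end vertex `0` it fixes every edge. An inner line is the intersection of two consecutive edges,
hence it is fixed too; the two end lines are fixed by assumption. -/

lemma forall_exists_of_even_of_odd {m : ℕ} {p : Fin (2 * m) → Fin (2 * m) → Prop}
    (heven : ∀ i : Fin m, ∃ j : Fin m, p ⟨2 * i, by omega⟩ ⟨2 * j, by omega⟩)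
    (hodd : ∀ i : Fin m, ∃ j : Fin m, p ⟨2 * i + 1, by omega⟩ ⟨2 * j + 1, by omega⟩)
    (k : Fin (2 * m)) : ∃ l, p k l := by
  obtain ⟨k, hk⟩ := k
  obtain ⟨i, rfl | rfl⟩ := Nat.even_or_odd' k
  · exact (heven ⟨i, by omega⟩).imp' _ fun _ h ↦ h
  · exact (hodd ⟨i, by omega⟩).imp' _ fun _ h ↦ h

lemma eq_self_of_injective_of_le_add_one {n : ℕ} {τ : Fin n → Fin n} (hinj : Function.Injective τ)
    (hzero : ∀ k : Fin n, (k : ℕ) = 0 → (τ k : ℕ) = 0)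
    (hsucc : ∀ k l : Fin n, (l : ℕ) = k + 1 → (τ l : ℕ) ≤ τ k + 1) (k : Fin n) : τ k = k := by
  obtain ⟨k, hk⟩ := k
  induction k using Nat.strong_induction_on with
  | _ k ih =>
    have hge : k ≤ τ ⟨k, hk⟩ := by
      by_contra! hlt
      exact hlt.ne (congrArg Fin.val (hinj (ih _ hlt (τ _).isLt)))
    have hle : (τ ⟨k, hk⟩ : ℕ) ≤ k := by
      cases k with
      | zero => exact (hzero _ rfl).le
      | succ k =>
        simpa only [ih k k.lt_succ_self (by omega)] using hsucc ⟨k, by omega⟩ ⟨k + 1, hk⟩ rfl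
    exact Fin.ext (hle.antisymm hge)

section LinearIndependent

open Submodule

variable {ι R M : Type*} [Semiring R] [AddCommMonoid M] [Module R M] {e : ι → M}

lemma span_image_inf_span_image (he : LinearIndependent R e) (s t : Set ι) :
    span R (e '' s) ⊓ span R (e '' t) = span R (e '' (s ∩ t)) := by
  simp only [Finsupp.span_image_eq_map_linearCombination, Finsupp.supported_inter,
    Submodule.map_inf _ he]

lemma apply_mem_span_image_iff_mem [Nontrivial R] (he : LinearIndependent R e) {s : Set ι} {i : ι} :
    e i ∈ span R (e '' s) ↔ i ∈ s :=
  ⟨fun h ↦ by_contra fun hi ↦ he.notMem_span_image hi h,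
    fun hi ↦ subset_span (Set.mem_image_of_mem e hi)⟩

end LinearIndependent

section Path

open Submodule

variable {R M : Type*} [Semiring R] [AddCommMonoid M] [Module R M] {n : ℕ}

/-- The plane spanned by the `k`-th edge of the path `e 0, e 1, …, e n`. The edges are indexed from
`0`, the `k`-th one joining the vertices `k` and `k + 1`. -/
def edgeSpan (R : Type*) {M : Type*} [Semiring R] [AddCommMonoid M] [Module R M] {n : ℕ}
    (e : Fin (n + 1) → M) (k : Fin n) : Submodule R M :=
  span R {e k.castSucc, e k.succ}

variable {e : Fin (n + 1) → M} {f : M →ₗ[R] M}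

lemma edgeSpan_eq_span_image (k : Fin n) :
    edgeSpan R e k = span R (e '' {k.castSucc, k.succ}) := by
  rw [edgeSpan, Set.image_pair]

lemma apply_mem_edgeSpan_iff [Nontrivial R] (he : LinearIndependent R e) {i : Fin (n + 1)}
    {k : Fin n} : e i ∈ edgeSpan R e k ↔ i = k.castSucc ∨ i = k.succ := by
  rw [edgeSpan_eq_span_image, apply_mem_span_image_iff_mem he, Set.mem_insert_iff,
    Set.mem_singleton_iff]

lemma edgeSpan_injective [Nontrivial R] (he : LinearIndependent R e) :
    Function.Injective (edgeSpan R e) := by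
  intro k l hkl
  have hk : k.castSucc = l.castSucc ∨ k.castSucc = l.succ :=
    (apply_mem_edgeSpan_iff he).1 (hkl ▸ (apply_mem_edgeSpan_iff he).2 (.inl rfl))
  have hl : l.castSucc = k.castSucc ∨ l.castSucc = k.succ :=
    (apply_mem_edgeSpan_iff he).1 (hkl ▸ (apply_mem_edgeSpan_iff he).2 (.inl rfl))
  simp only [Fin.ext_iff, Fin.val_castSucc, Fin.val_succ] at hk hl ⊢
  omega

lemma disjoint_edgeSpan_of_add_one_lt (he : LinearIndependent R e) {k l : Fin n}
    (hkl : (k : ℕ) + 1 < l) :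
    Disjoint (edgeSpan R e k) (edgeSpan R e l) := by
  rw [edgeSpan_eq_span_image, edgeSpan_eq_span_image]
  refine he.disjoint_span_image ?_
  simp only [Set.disjoint_insert_left, Set.disjoint_singleton_left, Set.mem_insert_iff,
    Set.mem_singleton_iff, Fin.ext_iff, Fin.val_castSucc, Fin.val_succ]
  omega

lemma edgeSpan_inf_edgeSpan_of_eq_add_one (he : LinearIndependent R e) {k l : Fin n}
    (hkl : (l : ℕ) = k + 1) :
    edgeSpan R e k ⊓ edgeSpan R e l = span R {e k.succ} := by
  have hinter : ({k.castSucc, k.succ} ∩ {l.castSucc, l.succ} : Set (Fin (n + 1))) = {k.succ} := by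
    ext i
    simp only [Set.mem_inter_iff, Set.mem_insert_iff, Set.mem_singleton_iff, Fin.ext_iff,
      Fin.val_castSucc, Fin.val_succ]
    omega
  rw [edgeSpan_eq_span_image, edgeSpan_eq_span_image, span_image_inf_span_image he, hinter,
    Set.image_singleton]

lemma map_edgeSpan_eq_self [Nontrivial R] (he : LinearIndependent R e) (hf : Function.Injective f)
    (hedge : ∀ k, ∃ l, (edgeSpan R e k).map f = edgeSpan R e l)
    (hfirst : (span R {e 0}).map f = span R {e 0}) (k : Fin n) :
    (edgeSpan R e k).map f = edgeSpan R e k := by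
  choose τ hτ using hedge
  have hinj : Function.Injective τ := fun k l hkl ↦
    edgeSpan_injective he (map_injective_of_injective hf (by rw [hτ, hτ, hkl]))
  have hzero (k : Fin n) (hk : (k : ℕ) = 0) : (τ k : ℕ) = 0 := by
    have hle : span R {e 0} ≤ edgeSpan R e k := by
      rw [span_singleton_le_iff_mem, apply_mem_edgeSpan_iff he]
      exact .inl (Fin.ext hk.symm)
    have hmem : e 0 ∈ edgeSpan R e (τ k) := by
      rw [← span_singleton_le_iff_mem, ← hfirst, ← hτ]
      exact map_mono hle
    obtain h | h := (apply_mem_edgeSpan_iff he).1 hmem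
    · exact (congrArg Fin.val h).symm
    · exact absurd h.symm (Fin.succ_ne_zero _)
  have hsucc (k l : Fin n) (hkl : (l : ℕ) = k + 1) : (τ l : ℕ) ≤ τ k + 1 := by
    by_contra! hlt
    have hbot : (edgeSpan R e k ⊓ edgeSpan R e l).map f = ⊥ := by
      rw [Submodule.map_inf f hf, hτ, hτ, (disjoint_edgeSpan_of_add_one_lt he hlt).eq_bot]
    have hfe : f (e k.succ) = 0 := by
      rw [← mem_bot R, ← hbot, edgeSpan_inf_edgeSpan_of_eq_add_one he hkl]
      exact mem_map_of_mem (mem_span_singleton_self _)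
    exact he.ne_zero _ (hf (hfe.trans (map_zero f).symm))
  rw [hτ, eq_self_of_injective_of_le_add_one hinj hzero hsucc]

lemma map_span_singleton_eq_self [Nontrivial R] (he : LinearIndependent R e)
    (hf : Function.Injective f) (hedge : ∀ k, ∃ l, (edgeSpan R e k).map f = edgeSpan R e l)
    (hfirst : (span R {e 0}).map f = span R {e 0})
    (hlast : (span R {e (Fin.last n)}).map f = span R {e (Fin.last n)}) (i : Fin (n + 1)) :
    (span R {e i}).map f = span R {e i} := by
  have hfix := map_edgeSpan_eq_self he hf hedge hfirst
  obtain rfl | ⟨k, rfl⟩ := Fin.eq_zero_or_eq_succ i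
  · exact hfirst
  obtain hk | hk : (k : ℕ) + 1 = n ∨ (k : ℕ) + 1 < n := by omega
  · rwa [show k.succ = Fin.last n from Fin.ext hk]
  · rw [← edgeSpan_inf_edgeSpan_of_eq_add_one he (l := ⟨k + 1, hk⟩) rfl,
      Submodule.map_inf f hf, hfix, hfix]

end Path

section Diagonal

open Submodule

lemma isDiag_of_map_span_single_le {ι R : Type*} [Fintype ι] [DecidableEq ι] [Semiring R]
    {A : Matrix ι ι R}
    (h : ∀ i, (span R {Pi.single i (1 : R)}).map A.vecMulLinear ≤ span R {Pi.single i (1 : R)}) :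
    A.IsDiag := by
  intro i j hij
  have hrow : A.row i ∈ span R {Pi.single i (1 : R)} := by
    rw [← single_one_vecMul]
    exact h i (mem_map_of_mem (mem_span_singleton_self _))
  obtain ⟨c, hc⟩ := mem_span_singleton.1 hrow
  calc A i j = (c • (Pi.single i 1 : ι → R)) j := (congrFun hc j).symm
    _ = 0 := by rw [Pi.smul_apply, Pi.single_eq_of_ne' hij, smul_zero]

theorem stmt14_general {R : Type*} [Semiring R] {n : ℕ} {A : Matrix (Fin (n + 1)) (Fin (n + 1)) R}
    (hA : Function.Injective A.vecMul)
    (hedge : ∀ k, ∃ l, (edgeSpan R (fun i ↦ Pi.single i (1 : R)) k).map A.vecMulLinear =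
      edgeSpan R (fun i ↦ Pi.single i (1 : R)) l)
    (hfirst : (span R {Pi.single 0 (1 : R)}).map A.vecMulLinear = span R {Pi.single 0 (1 : R)})
    (hlast : (span R {Pi.single (Fin.last n) (1 : R)}).map A.vecMulLinear =
      span R {Pi.single (Fin.last n) (1 : R)}) :
    A.IsDiag := by
  obtain _ | _ := subsingleton_or_nontrivial R
  · exact fun _ _ _ ↦ Subsingleton.elim _ _
  have he := Pi.linearIndependent_single_one (Fin (n + 1)) R
  exact isDiag_of_map_span_single_le fun i ↦
    (map_span_singleton_eq_self he hA hedge hfirst hlast i).le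

end Diagonal

theorem stmt14 (F : Type) [Field F] (n m : ℕ) (hm : 1 ≤ m) (hn : n = 2 * m + 1)
    (g : GL (Fin n) F)
    (V V' : Fin m → Submodule F (Fin n → F)) (W W' : Submodule F (Fin n → F))
    (hV : ∀ i : Fin m, V i = Submodule.span F
      {Pi.single (⟨2 * (i : ℕ), by omega⟩ : Fin n) (1 : F),
       Pi.single (⟨2 * (i : ℕ) + 1, by omega⟩ : Fin n) (1 : F)})
    (hV' : ∀ i : Fin m, V' i = Submodule.span F
      {Pi.single (⟨2 * (i : ℕ) + 1, by omega⟩ : Fin n) (1 : F),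
       Pi.single (⟨2 * (i : ℕ) + 2, by omega⟩ : Fin n) (1 : F)})
    (hW : W = Submodule.span F {Pi.single (⟨n - 1, by omega⟩ : Fin n) (1 : F)})
    (hW' : W' = Submodule.span F {Pi.single (⟨0, by omega⟩ : Fin n) (1 : F)})
    (hgV : ∀ i : Fin m, ∃ j : Fin m,
      (V i).map (Matrix.vecMulLinear (g : Matrix (Fin n) (Fin n) F)) = V j)
    (hgW : W.map (Matrix.vecMulLinear (g : Matrix (Fin n) (Fin n) F)) = W)
    (hgV' : ∀ i : Fin m, ∃ j : Fin m,
      (V' i).map (Matrix.vecMulLinear (g : Matrix (Fin n) (Fin n) F)) = V' j)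
    (hgW' : W'.map (Matrix.vecMulLinear (g : Matrix (Fin n) (Fin n) F)) = W') :
    ∀ i j : Fin n, i ≠ j → (g : Matrix (Fin n) (Fin n) F) i j = 0 := by
  subst hn hW hW'
  obtain rfl := funext hV
  obtain rfl := funext hV'
  exact fun _ _ h ↦ stmt14_general (vecMul_injective_of_isUnit g.isUnit)
    (forall_exists_of_even_of_odd hgV hgV') hgW' hgW h
end
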